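/- arXiv:1803.06402 — 2 statements merged into one kernel-verified Lean document; each statement's English description precedes it below -/
import Mathlib

section
/- Let $(A_m)_{m\in\mathbb{Z}}$ be a uniformly bounded sequence of invertible bounded operators on a Banach space $X$ admitting an exponential dichotomy. Let $(g_n)_{n\in\mathbb{Z}}$ be differentiable maps $g_n:X\to X$ with uniformly small derivatives ($\|d_xg_n\|\le c/2$ where $c$ is the robustness constant), uniformly Hölder derivatives, and $\sup_x\|g_n(x)\|\le\delta$ for a sufficiently small $\delta>0$, such that each $G_n=A_n+g_n$ is a homeomorphism. Then there exists a unique sequence of homeomorphisms $h_m:X\to X$, $m\in\mathbb{Z}$, such that $h_{m+1}\circ G_m = A_m\circ h_m$ and $\sup_{x\in X}\|h_m(x)-x\|\le\varepsilon$ for each $m$ (nonautonomous Grobman–Hartman theorem). -/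
/-- The sequence `A` of bounded operators admits an exponential dichotomy: there exist
an evolution family `E`, projections `P` commuting with the dynamics and constants
`C, lam > 0` with the usual exponential bounds. -/
def ExpDichotomy {X : Type*} [NormedAddCommGroup X] [NormedSpace ℝ X]
    (A : ℤ → X →L[ℝ] X) : Prop :=
  ∃ (E : ℤ → ℤ → X →L[ℝ] X) (P : ℤ → X →L[ℝ] X) (C lam : ℝ),
    0 < C ∧ 0 < lam ∧
    (∀ n, E n n = ContinuousLinearMap.id ℝ X) ∧
    (∀ m n, E (m + 1) n = (A m).comp (E m n)) ∧
    (∀ m, (P m).comp (P m) = P m) ∧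
    (∀ m, (P (m + 1)).comp (A m) = (A m).comp (P m)) ∧
    (∀ m n, n ≤ m → ‖(E m n).comp (P n)‖ ≤ C * Real.exp (-lam * ((m - n : ℤ) : ℝ))) ∧
    (∀ m n, m ≤ n → ‖(E m n).comp (ContinuousLinearMap.id ℝ X - P n)‖ ≤
      C * Real.exp (-lam * ((n - m : ℤ) : ℝ)))

/-!
Every sequence `B` within `c` of `A` has an exponential dichotomy, so a bounded sequence `y` is
controlled by its residuals `y (n + 1) - B n (y n)`. For `κ < c` the control is uniform over the `B`
within `κ` of `A`: by Baire's theorem it is uniform over those that agree with a fixed sequence at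
finitely many times, and this constraint can be lifted one time after the other, because rank-one
modifications of `B n` at a single time `n` stay within `c` of `A`.

By Hahn–Banach the maps of a `κ`-Lipschitz perturbation `Φ` of `A` act on the difference of two
sequences as some `B` within `κ` of `A`, so the uniform bound carries over to `Φ`. It shows that
orbits at bounded distance coincide, and it is the a priori estimate in the continuity method that
produces an orbit of `Φ` near every pseudo-orbit. The conjugacy from `Φ` to `Ψ` maps `x` to the
initial point of the `Ψ`-orbit shadowing the `Φ`-orbit of `x`. It is continuous because a tent
cutoff makes the residual bound local up to an error inversely proportional to the length of the
time window.
-/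

open Filter Topology
open scoped NNReal BoundedContinuousFunction

theorem eq_zero_of_forall_norm_le_mul_pow {X : Type*} [NormedAddCommGroup X] {x : X} {K q : ℝ}
    (hq₀ : 0 ≤ q) (hq₁ : q < 1) (hx : ∀ k : ℕ, ‖x‖ ≤ K * q ^ k) : x = 0 := by
  have hlim : Tendsto (fun k : ℕ => K * q ^ k) atTop (𝓝 (K * 0)) :=
    (tendsto_pow_atTop_nhds_zero_of_lt_one hq₀ hq₁).const_mul K
  rw [mul_zero] at hlim
  exact norm_le_zero_iff.1 (ge_of_tendsto' hlim hx)

theorem exists_forall_norm_le_of_finite_support {ι X : Type*} [SeminormedAddCommGroup X]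
    {y : ι → X} (hy : y.support.Finite) : ∃ Y, ∀ i, ‖y i‖ ≤ Y := by
  obtain ⟨Y, hY⟩ := ((hy.image y).insert 0 |>.subset
    (Function.range_subset_insert_image_support y)).isBounded.exists_norm_le
  exact ⟨Y, fun i => hY _ (Set.mem_range_self i)⟩

theorem exists_forall_succ_eq_mul {G : Type*} [Group G] (φ : ℤ → G) :
    ∃ H : ℤ → G, ∀ n, H (n + 1) = φ n * H n := by
  refine ⟨fun n => n.inductionOn' 0 1 (fun k _ h => φ k * h) fun k _ h => (φ (k - 1))⁻¹ * h,
    fun n => ?_⟩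
  rcases le_or_gt 0 n with hn | hn
  · exact Int.inductionOn'_add_one hn
  · obtain ⟨k, rfl⟩ : ∃ k, n = k - 1 := ⟨n + 1, by ring⟩
    simp only [sub_add_cancel, Int.inductionOn'_sub_one (b := 0) (show k ≤ 0 by lia),
      mul_inv_cancel_left]

theorem injective_of_surjective_sub_smulRight {R M N : Type*} [CommRing R] [AddCommGroup M]
    [Module R M] [AddCommGroup N] [Module R N] {S : M →ₗ[R] N} (hS : Function.Injective S)
    {φ : M →ₗ[R] R} {u : N} (hsurj : Function.Surjective (S - φ.smulRight u)) :
    Function.Injective (S - φ.smulRight u) := by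
  refine (injective_iff_map_eq_zero _).2 fun x hx => ?_
  simp only [LinearMap.sub_apply, LinearMap.smulRight_apply, sub_eq_zero] at hx
  obtain ⟨y, hy⟩ := hsurj u
  simp only [LinearMap.sub_apply, LinearMap.smulRight_apply, sub_eq_iff_eq_add] at hy
  have hxy : φ x • y = (1 + φ y) • x := by
    apply hS
    rw [map_smul, map_smul, hx, hy]
    module
  have hφx : φ x = 0 := by
    have := congrArg φ hxy
    rw [map_smul, map_smul, smul_eq_mul, smul_eq_mul] at this
    linear_combination -this
  exact hS (by rw [hx, hφx, zero_smul, map_zero])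

theorem exists_rank_one_apply_eq {E F : Type*} [NormedAddCommGroup E] [NormedSpace ℝ E]
    [NormedAddCommGroup F] [NormedSpace ℝ F] {κ : ℝ} (hκ : 0 ≤ κ) {x : E} {e : F}
    (he : ‖e‖ ≤ κ * ‖x‖) :
    ∃ (φ : E →L[ℝ] ℝ) (u : F), ‖φ.smulRight u‖ ≤ κ ∧ φ x • u = e := by
  rcases eq_or_ne x 0 with rfl | hx
  · exact ⟨0, 0, by simpa using hκ, by simpa [eq_comm] using he⟩
  obtain ⟨φ, hφ, hφx⟩ := exists_dual_vector ℝ x (norm_ne_zero_iff.2 hx)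
  refine ⟨φ, ‖x‖⁻¹ • e, ?_, ?_⟩
  · rw [ContinuousLinearMap.norm_smulRight_apply, hφ, one_mul, norm_smul, norm_inv, norm_norm]
    rwa [inv_mul_le_iff₀ (norm_pos_iff.2 hx), mul_comm]
  · rw [hφx]
    exact smul_inv_smul₀ (norm_ne_zero_iff.2 hx) e

section Dichotomy

variable {X : Type*} [NormedAddCommGroup X] [NormedSpace ℝ X]

/-- An evolution family `E` of `B` that contracts geometrically forward in time on the values of
`P` and backward in time on those of `1 - P`. An exponential dichotomy with exponent `lam` yields
such a family with rate `q = exp (-lam)`. -/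
structure IsGeometricSplitting (B : ℤ → X →L[ℝ] X) (E : ℤ → ℤ → X →L[ℝ] X)
    (P : ℤ → X →L[ℝ] X) (C q : ℝ) : Prop where
  coeff_nonneg : 0 ≤ C
  rate_nonneg : 0 ≤ q
  rate_lt_one : q < 1
  evol_self (n : ℤ) (x : X) : E n n x = x
  evol_succ (m n : ℤ) (x : X) : E (m + 1) n x = B m (E m n x)
  map_comm (n : ℤ) (x : X) : P (n + 1) (B n x) = B n (P n x)
  norm_forward_le {m n : ℤ} (h : n ≤ m) (x : X) :
    ‖E m n (P n x)‖ ≤ C * q ^ (m - n).natAbs * ‖x‖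
  norm_backward_le {m n : ℤ} (h : m ≤ n) (x : X) :
    ‖E m n (x - P n x)‖ ≤ C * q ^ (m - n).natAbs * ‖x‖

variable {B : ℤ → X →L[ℝ] X} {E : ℤ → ℤ → X →L[ℝ] X} {P : ℤ → X →L[ℝ] X} {C q : ℝ}

theorem ExpDichotomy.exists_isGeometricSplitting (hB : ExpDichotomy B) :
    ∃ E P C q, IsGeometricSplitting B E P C q := by
  obtain ⟨E, P, C, lam, hC, hlam, hE, hE', -, hP, hs, hu⟩ := hB
  have hexp : ∀ k : ℤ, 0 ≤ k → Real.exp (-lam * (k : ℝ)) = Real.exp (-lam) ^ k.natAbs := by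
    intro k hk
    rw [← Real.exp_nat_mul, Nat.cast_natAbs, abs_of_nonneg hk, mul_comm]
  refine ⟨E, P, C, Real.exp (-lam), hC.le, Real.exp_nonneg _, Real.exp_lt_one_iff.2 (by linarith),
    fun n x => by rw [hE, ContinuousLinearMap.id_apply],
    fun m n x => by rw [hE', ContinuousLinearMap.comp_apply],
    fun n => DFunLike.congr_fun (hP n), fun {m n} h x => ?_, fun {m n} h x => ?_⟩
  · rw [← hexp _ (sub_nonneg.2 h)]
    exact ContinuousLinearMap.le_of_opNorm_le _ (hs m n h) x
  · rw [← Int.natAbs_neg, neg_sub, ← hexp _ (sub_nonneg.2 h)]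
    simpa only [ContinuousLinearMap.comp_apply, sub_apply,
      ContinuousLinearMap.id_apply] using ContinuousLinearMap.le_of_opNorm_le _ (hu m n h) x

theorem ExpDichotomy.surjective (hB : ExpDichotomy B) (n : ℤ) : Function.Surjective (B n) := by
  obtain ⟨E, P, C, q, h⟩ := hB.exists_isGeometricSplitting
  exact fun x => ⟨E n (n + 1) x, by rw [← h.evol_succ, h.evol_self]⟩

/-- Green's function of the splitting: the kernel of the operator that solves
`v (n + 1) = B n (v n) + f n` in bounded sequences. -/
def green (E : ℤ → ℤ → X →L[ℝ] X) (P : ℤ → X →L[ℝ] X) (n k : ℤ) : X →L[ℝ] X :=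
  if k ≤ n then (E n k).comp (P k) else -(E n k).comp (.id ℝ X - P k)

namespace IsGeometricSplitting

theorem orbit_eq (h : IsGeometricSplitting B E P C q) (hinj : ∀ n, Function.Injective (B n))
    {w : ℤ → X} (hw : ∀ n, w (n + 1) = B n (w n)) (m n : ℤ) : w m = E m n (w n) := by
  induction m using Int.inductionOn' (b := n) with
  | zero => rw [h.evol_self]
  | succ k _ ih => rw [hw, h.evol_succ, ih]
  | pred k _ ih =>
    apply hinj (k - 1)
    rw [← hw, ← h.evol_succ, sub_add_cancel, ih]

theorem orbit_eq_zero (h : IsGeometricSplitting B E P C q)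
    (hinj : ∀ n, Function.Injective (B n)) {w : ℤ → X} {V : ℝ} (hV : ∀ n, ‖w n‖ ≤ V)
    (hw : ∀ n, w (n + 1) = B n (w n)) (n : ℤ) : w n = 0 := by
  have hPw : P n (w n) = 0 := by
    refine eq_zero_of_forall_norm_le_mul_pow (K := C * V) h.rate_nonneg h.rate_lt_one fun k => ?_
    rw [h.orbit_eq hinj (w := fun n => P n (w n)) (fun n => by rw [hw, h.map_comm]) n (n - k)]
    refine (h.norm_forward_le (by lia) _).trans ?_
    rw [sub_sub_cancel, Int.natAbs_natCast, mul_right_comm]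
    gcongr
    exacts [pow_nonneg h.rate_nonneg k, h.coeff_nonneg, hV _]
  have hQw : w n - P n (w n) = 0 := by
    refine eq_zero_of_forall_norm_le_mul_pow (K := C * V) h.rate_nonneg h.rate_lt_one fun k => ?_
    rw [h.orbit_eq hinj (w := fun n => w n - P n (w n))
      (fun n => by rw [hw, h.map_comm, map_sub]) n (n + k)]
    refine (h.norm_backward_le (by lia) _).trans ?_
    rw [sub_add_cancel_left, Int.natAbs_neg, Int.natAbs_natCast, mul_right_comm]
    gcongr
    exacts [pow_nonneg h.rate_nonneg k, h.coeff_nonneg, hV _]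
  rw [← sub_add_cancel (w n) (P n (w n)), hQw, hPw, add_zero]

theorem norm_green_apply_le (h : IsGeometricSplitting B E P C q) (n k : ℤ) (x : X) :
    ‖green E P n k x‖ ≤ C * q ^ (n - k).natAbs * ‖x‖ := by
  rw [green]
  split_ifs with hkn
  · simpa only [ContinuousLinearMap.comp_apply] using h.norm_forward_le hkn x
  · simpa only [neg_apply, norm_neg, ContinuousLinearMap.comp_apply, sub_apply,
      ContinuousLinearMap.id_apply] using h.norm_backward_le (not_le.1 hkn).le x

theorem green_succ_sub (h : IsGeometricSplitting B E P C q) (n k : ℤ) (x : X) :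
    green E P (n + 1) k x - B n (green E P n k x) = if k = n + 1 then x else 0 := by
  rcases lt_trichotomy k (n + 1) with hk | rfl | hk
  · simp [green, hk.le, hk.ne, Int.lt_add_one_iff.1 hk, h.evol_succ]
  · simp [green, h.evol_self, ← h.evol_succ]
  · simp [green, hk.not_ge, hk.ne', show ¬ k ≤ n by lia, h.evol_succ]

theorem exists_bounded_solution [CompleteSpace X] (h : IsGeometricSplitting B E P C q)
    {f : ℤ → X} {η : ℝ} (hf : ∀ n, ‖f n‖ ≤ η) :
    ∃ v : ℤ → X, (∀ n, v (n + 1) = B n (v n) + f n) ∧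
      ∀ n, ‖v n‖ ≤ C * (∑' k : ℤ, q ^ k.natAbs) * η := by
  have hgeom : Summable fun k : ℤ => q ^ k.natAbs := by
    have := summable_geometric_of_lt_one h.rate_nonneg h.rate_lt_one
    exact .of_nat_of_neg (by simpa using this) (by simpa using this)
  have hmaj (n : ℤ) : HasSum (fun j : ℤ => C * q ^ (n - (j + 1)).natAbs * η)
      (C * (∑' k : ℤ, q ^ k.natAbs) * η) := by
    refine HasSum.mul_right _ (HasSum.mul_left _ ?_)
    simpa only [Function.comp_def, Equiv.subLeft_apply, sub_sub, add_comm] using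
      (Equiv.subLeft (n - 1)).hasSum_iff.2 hgeom.hasSum
  have hle (n j : ℤ) : ‖green E P n (j + 1) (f j)‖ ≤ C * q ^ (n - (j + 1)).natAbs * η := by
    refine (h.norm_green_apply_le n (j + 1) (f j)).trans ?_
    have := mul_nonneg h.coeff_nonneg (pow_nonneg h.rate_nonneg (n - (j + 1)).natAbs)
    gcongr
    exact hf j
  have hsum (n : ℤ) : Summable fun j : ℤ => green E P n (j + 1) (f j) :=
    .of_norm_bounded (hmaj n).summable (hle n)
  refine ⟨fun n => ∑' j : ℤ, green E P n (j + 1) (f j), fun n => ?_,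
    fun n => tsum_of_norm_bounded (hmaj n) (hle n)⟩
  rw [← sub_eq_iff_eq_add', (B n).map_tsum (hsum n),
    ← (hsum (n + 1)).tsum_sub ((hsum n).mapL (B n))]
  simp only [h.green_succ_sub, add_left_inj, tsum_ite_eq]

end IsGeometricSplitting

end Dichotomy

section ResidualBounds

variable {X : Type*} [NormedAddCommGroup X] [NormedSpace ℝ X]
  {A B : ℤ → X →L[ℝ] X} {L η V : ℝ} {y : ℤ → X}

/-- The operator `y ↦ (y (n + 1) - B n (y n))ₙ` is bounded below by `L⁻¹` in the supremum norm.
It is tested on finitely supported sequences only, so that the condition is closed in `B` for the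
product topology; see `HasResidualBound.norm_le_of_bounded` for bounded sequences. -/
def HasResidualBound (B : ℤ → X →L[ℝ] X) (L : ℝ) : Prop :=
  ∀ (y : ℤ → X) (η : ℝ), y.support.Finite → (∀ n, ‖y (n + 1) - B n (y n)‖ ≤ η) →
    ∀ n, ‖y n‖ ≤ L * η

/-- Perron's condition: every bounded forcing term of the inhomogeneous equation driven by `B` has
a bounded solution. -/
def HasBoundedSolutions (B : ℤ → X →L[ℝ] X) : Prop :=
  ∀ (f : ℤ → X) (η : ℝ), (∀ n, ‖f n‖ ≤ η) →
    ∃ (v : ℤ → X) (V : ℝ), (∀ n, ‖v n‖ ≤ V) ∧ ∀ n, v (n + 1) = B n (v n) + f n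

/-- The tent function with peak `1` at `0` and support in `(-W, W)`, used as a cutoff. -/
noncomputable def tent (W : ℕ) (k : ℤ) : ℝ :=
  max (1 - |(k : ℝ)| / W) 0

theorem tent_zero (W : ℕ) : tent W 0 = 1 := by
  simp [tent]

theorem tent_nonneg (W : ℕ) (k : ℤ) : 0 ≤ tent W k :=
  le_max_right _ _

theorem tent_le_one (W : ℕ) (k : ℤ) : tent W k ≤ 1 :=
  max_le (sub_le_self _ (by positivity)) zero_le_one

theorem tent_eq_zero {W : ℕ} (hW : 0 < W) {k : ℤ} (hk : W ≤ |k|) : tent W k = 0 := by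
  refine max_eq_right (sub_nonpos.2 ((one_le_div (Nat.cast_pos.2 hW)).2 ?_))
  exact_mod_cast hk

theorem abs_tent_succ_sub_le (W : ℕ) (k : ℤ) : |tent W (k + 1) - tent W k| ≤ 1 / W := by
  refine (abs_max_sub_max_le_abs _ _ _).trans ?_
  rw [sub_sub_sub_cancel_left, ← sub_div, abs_div, Nat.abs_cast]
  gcongr
  refine (abs_abs_sub_abs_le_abs_sub _ _).trans_eq ?_
  simp

namespace HasResidualBound

theorem nonneg (hB : HasResidualBound B L) : 0 ≤ L := by
  simpa using hB 0 1 (by simp) (by simp) 0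

theorem mono {L' : ℝ} (hB : HasResidualBound B L) (hL : L ≤ L') : HasResidualBound B L' := by
  intro y η hy hη n
  have hη₀ : 0 ≤ η := (norm_nonneg _).trans (hη 0)
  exact (hB y η hy hη n).trans (by gcongr)

theorem norm_le_of_window (hB : HasResidualBound B L) {W : ℕ} (hW : 0 < W) {n₀ : ℤ}
    (hV : ∀ n, |n - n₀| ≤ W → ‖y n‖ ≤ V) (hη : ∀ n, ‖y (n + 1) - B n (y n)‖ ≤ η) :
    ‖y n₀‖ ≤ L * (η + V / W) := by
  have hV₀ : 0 ≤ V := (norm_nonneg _).trans (hV n₀ (by simp))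
  have hsupp : (fun n => tent W (n - n₀) • y n).support.Finite := by
    refine (Set.finite_Icc (n₀ - W) (n₀ + W)).subset fun n hn => ?_
    have hlt : |n - n₀| < W := not_le.1 fun h => hn (by simp only [tent_eq_zero hW h, zero_smul])
    rw [abs_lt] at hlt
    exact ⟨by lia, by lia⟩
  have hjump (n : ℤ) :
      ‖(tent W (n + 1 - n₀) - tent W (n - n₀)) • y (n + 1)‖ ≤ V / W := by
    by_cases hn : |n + 1 - n₀| ≤ W
    · rw [norm_smul, Real.norm_eq_abs, ← one_div_mul_eq_div, add_sub_right_comm]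
      gcongr
      exacts [abs_tent_succ_sub_le _ _, hV _ hn]
    · rw [tent_eq_zero hW (not_le.1 hn).le, tent_eq_zero hW (by grind), sub_zero, zero_smul,
        norm_zero]
      positivity
  have hres (n : ℤ) : ‖tent W (n + 1 - n₀) • y (n + 1) - B n (tent W (n - n₀) • y n)‖
      ≤ η + V / W := by
    calc _ = ‖tent W (n - n₀) • (y (n + 1) - B n (y n))
          + (tent W (n + 1 - n₀) - tent W (n - n₀)) • y (n + 1)‖ := by
          rw [map_smul]; congr 1; module
      _ ≤ ‖y (n + 1) - B n (y n)‖ + V / W := by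
          refine norm_add_le_of_le ?_ (hjump n)
          rw [norm_smul, Real.norm_of_nonneg (tent_nonneg _ _)]
          exact mul_le_of_le_one_left (norm_nonneg _) (tent_le_one _ _)
      _ ≤ _ := by gcongr; exact hη n
  simpa only [sub_self, tent_zero, one_smul] using hB _ _ hsupp hres n₀

theorem norm_le_of_bounded (hB : HasResidualBound B L) (hV : ∀ n, ‖y n‖ ≤ V)
    (hη : ∀ n, ‖y (n + 1) - B n (y n)‖ ≤ η) (n : ℤ) : ‖y n‖ ≤ L * η := by
  have hlim : Tendsto (fun W : ℕ => L * (η + V / W)) atTop (𝓝 (L * (η + 0))) :=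
    ((tendsto_const_div_atTop_nhds_zero_nat V).const_add η).const_mul L
  rw [add_zero] at hlim
  refine ge_of_tendsto hlim ?_
  filter_upwards [eventually_gt_atTop 0] with W hW
  exact hB.norm_le_of_window hW (fun n _ => hV n) hη

end HasResidualBound

theorem isClosed_setOf_hasResidualBound (L : ℝ) :
    IsClosed {B : ℤ → X →L[ℝ] X | HasResidualBound B L} := by
  refine isClosed_of_closure_subset fun B hB y η hy hη n => ?_
  have hε : ∀ ε > 0, ‖y n‖ ≤ L * (η + ε) := by
    intro ε hε
    have hnear : ∀ᶠ B' in 𝓝 B, ∀ m ∈ y.support, ‖y (m + 1) - B' m (y m)‖ < η + ε := by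
      refine (eventually_all_finite hy).2 fun m _ => ?_
      have hcont : Continuous fun B' : ℤ → X →L[ℝ] X => ‖y (m + 1) - B' m (y m)‖ := by fun_prop
      exact hcont.tendsto B |>.eventually_lt_const (by linarith [hη m])
    obtain ⟨B', hB', hres⟩ := ((mem_closure_iff_frequently.1 hB).and_eventually hnear).exists
    refine hB' y _ hy (fun m => ?_) n
    by_cases hm : y m = 0
    · simpa [hm] using (hη m).trans (le_add_of_nonneg_right hε.le)
    · exact (hres m hm).le
  have hlim : Tendsto (fun ε => L * (η + ε)) (𝓝[>] 0) (𝓝 (L * (η + 0))) :=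
    Continuous.tendsto (by fun_prop) 0 |>.mono_left nhdsWithin_le_nhds
  rw [add_zero] at hlim
  exact ge_of_tendsto hlim (eventually_mem_nhdsWithin.mono hε)

theorem injective_of_norm_sub_le {c : ℝ} (hrobust : ∀ B : ℤ → X →L[ℝ] X,
      (∀ n, ‖A n - B n‖ ≤ c) → ExpDichotomy B) (hinj : ∀ n, Function.Injective (A n))
    (hB : ∀ n, ‖A n - B n‖ ≤ c) (n : ℤ) : Function.Injective (B n) := by
  have hc : 0 ≤ c := (norm_nonneg _).trans (hB n)
  refine (injective_iff_map_eq_zero _).2 fun x hx => ?_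
  have hAx : ‖A n x‖ ≤ c * ‖x‖ := by
    simpa [hx] using (A n - B n).le_of_opNorm_le (hB n) x
  obtain ⟨φ, u, hφu, hφx⟩ := exists_rank_one_apply_eq hc hAx
  have hsurj : Function.Surjective (A n - φ.smulRight u) :=
    (hrobust (fun k => A k - φ.smulRight u) fun k => by rwa [sub_sub_cancel]).surjective n
  refine (injective_iff_map_eq_zero _).1
    (injective_of_surjective_sub_smulRight (S := (A n : X →ₗ[ℝ] X)) (φ := (φ : X →ₗ[ℝ] ℝ))
      (hinj n) hsurj) x ?_
  rw [LinearMap.sub_apply, LinearMap.smulRight_apply]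
  exact sub_eq_zero.2 hφx.symm

section Complete

variable [CompleteSpace X]

theorem ExpDichotomy.hasBoundedSolutions (hB : ExpDichotomy B) : HasBoundedSolutions B := by
  obtain ⟨E, P, C, q, h⟩ := hB.exists_isGeometricSplitting
  intro f η hf
  obtain ⟨v, hv, hvη⟩ := h.exists_bounded_solution hf
  exact ⟨v, _, hvη, hv⟩

theorem ExpDichotomy.exists_hasResidualBound (hB : ExpDichotomy B)
    (hinj : ∀ n, Function.Injective (B n)) : ∃ L, HasResidualBound B L := by
  obtain ⟨E, P, C, q, h⟩ := hB.exists_isGeometricSplitting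
  refine ⟨C * ∑' k : ℤ, q ^ k.natAbs, fun y η hy hη n => ?_⟩
  obtain ⟨v, hv, hvη⟩ := h.exists_bounded_solution hη
  obtain ⟨Y, hY⟩ := exists_forall_norm_le_of_finite_support hy
  have hyv : y n - v n = 0 := by
    refine h.orbit_eq_zero hinj (w := fun n => y n - v n) (fun n => norm_sub_le_of_le
      (hY n) (hvη n)) (fun n => ?_) n
    rw [hv, map_sub]
    abel
  rw [sub_eq_zero.1 hyv]
  exact hvη n

end Complete

section Update

variable {m : ℤ} {S : X →L[ℝ] X} {ρ τ : ℝ}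

theorem norm_le_of_hasResidualBound_update
    (hS : HasResidualBound (Function.update B m S) L)
    (hsol : HasBoundedSolutions (Function.update B m S)) (hρ : ‖B m - S‖ ≤ ρ) (hτ : 0 < τ)
    (hT : ∀ T, ‖T - B m‖ ≤ τ → ∃ L', HasResidualBound (Function.update B m T) L')
    (hy : ∀ n, ‖y n‖ ≤ V) (hη : ∀ n, ‖y (n + 1) - B n (y n)‖ ≤ η) :
    ‖y m‖ ≤ (L + ρ * L / τ) * η := by
  obtain ⟨v, V', hV', hv⟩ := hsol _ η hη
  have hvη : ‖v m‖ ≤ L * η := by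
    refine hS.norm_le_of_bounded hV' (fun n => ?_) m
    rw [hv, add_sub_cancel_left]
    exact hη n
  have hstep (n : ℤ) : y (n + 1) - v (n + 1)
      = B n (y n - v n) + (B n - Function.update B m S n) (v n) := by
    rw [hv, map_sub, sub_apply]
    abel
  have he : ‖(B m - S) (v m)‖ ≤ ρ * (L * η) := (B m - S).le_of_opNorm_le_of_le hρ hvη
  have hz : τ * ‖y m - v m‖ ≤ ρ * (L * η) := by
    by_contra! hlt
    obtain ⟨φ, u, hφu, hφ⟩ := exists_rank_one_apply_eq hτ.le (he.trans hlt.le)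
    obtain ⟨L', hL'⟩ := hT (B m + φ.smulRight u) (by rwa [add_sub_cancel_left])
    have hzero : ‖y m - v m‖ ≤ L' * 0 := by
      refine hL'.norm_le_of_bounded (y := fun n => y n - v n)
        (fun n => norm_sub_le_of_le (hy n) (hV' n)) (fun n => norm_le_zero_iff.2 ?_) m
      rcases eq_or_ne n m with rfl | hn
      · simp only [hstep, Function.update_self, add_apply, ContinuousLinearMap.smulRight_apply, hφ,
          sub_self]
      · simp [hstep, hn]
    rw [mul_zero] at hzero
    have hnonneg : 0 ≤ ρ * (L * η) := (norm_nonneg _).trans he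
    nlinarith
  calc ‖y m‖ ≤ ‖v m‖ + ‖y m - v m‖ := norm_le_insert' _ _
    _ ≤ L * η + ρ * (L * η) / τ := by gcongr; rwa [le_div_iff₀' hτ]
    _ = (L + ρ * L / τ) * η := by ring

theorem HasResidualBound.of_update (hS : HasResidualBound (Function.update B m S) L)
    (hsol : HasBoundedSolutions (Function.update B m S)) (hρ : ‖B m - S‖ ≤ ρ) (hτ : 0 < τ)
    (hT : ∀ T, ‖T - B m‖ ≤ τ → ∃ L', HasResidualBound (Function.update B m T) L') :
    HasResidualBound B (L * (1 + ρ * (L + ρ * L / τ))) := by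
  intro y η hy hη n
  obtain ⟨V, hV⟩ := exists_forall_norm_le_of_finite_support hy
  have hym := norm_le_of_hasResidualBound_update hS hsol hρ hτ hT hV hη
  have hcorr (n : ℤ) :
      ‖(B n - Function.update B m S n) (y n)‖ ≤ ρ * ((L + ρ * L / τ) * η) := by
    rcases eq_or_ne n m with rfl | hn
    · rw [Function.update_self]
      exact (B n - S).le_of_opNorm_le_of_le hρ hym
    · rw [Function.update_of_ne hn, sub_self, zero_apply, norm_zero]
      exact (norm_nonneg _).trans ((B m - S).le_of_opNorm_le_of_le hρ hym)
  refine (hS y (η + ρ * ((L + ρ * L / τ) * η)) hy (fun n => ?_) n).trans_eq (by ring)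
  rw [← sub_add_sub_cancel _ (B n (y n)), ← sub_apply]
  exact norm_add_le_of_le (hη n) (hcorr n)

end Update

section Uniform

variable {κ c : ℝ}

-- Baire category on the product of the balls of radius `κ` about the `A n`, covered by the
-- closed sets of sequences with residual bound `k`, `k : ℕ`.
theorem exists_finset_hasResidualBound [CompleteSpace X] (hκ : 0 ≤ κ)
    (hres : ∀ B : ℤ → X →L[ℝ] X, (∀ n, ‖A n - B n‖ ≤ κ) → ∃ L, HasResidualBound B L) :
    ∃ (I : Finset ℤ) (B₀ : ℤ → X →L[ℝ] X) (L : ℝ), (∀ n, ‖A n - B₀ n‖ ≤ κ) ∧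
      ∀ B : ℤ → X →L[ℝ] X, (∀ n, ‖A n - B n‖ ≤ κ) → (∀ i ∈ I, B i = B₀ i) →
        HasResidualBound B L := by
  let Z := (n : ℤ) → Metric.closedBall (A n) κ
  have hmem (Q : Z) (n : ℤ) : ‖A n - Q n‖ ≤ κ := by
    rw [← dist_eq_norm']; exact (Q n).2
  have : Nonempty Z := ⟨fun n => ⟨A n, Metric.mem_closedBall_self hκ⟩⟩
  have (n : ℤ) : CompleteSpace (Metric.closedBall (A n) κ) :=
    Metric.isClosed_closedBall.completeSpace_coe
  have hclosed (k : ℕ) : IsClosed {Q : Z | HasResidualBound (fun n => (Q n : X →L[ℝ] X)) k} :=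
    (isClosed_setOf_hasResidualBound (k : ℝ)).preimage (by fun_prop)
  have hcover : ⋃ k : ℕ, {Q : Z | HasResidualBound (fun n => (Q n : X →L[ℝ] X)) k} =
      Set.univ := by
    refine Set.iUnion_eq_univ_iff.2 fun Q => ?_
    obtain ⟨L, hL⟩ := hres _ (hmem Q)
    exact ⟨⌈L⌉₊, hL.mono (Nat.le_ceil L)⟩
  obtain ⟨k, Q₀, hQ₀⟩ := nonempty_interior_of_iUnion_of_closed hclosed hcover
  obtain ⟨I, U, hU, hIU⟩ := isOpen_pi_iff.1 isOpen_interior Q₀ hQ₀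
  refine ⟨I, fun n => Q₀ n, k, hmem Q₀, fun B hB hBI => ?_⟩
  let Q : Z := fun n => ⟨B n, by rw [Metric.mem_closedBall, dist_eq_norm']; exact hB n⟩
  have hQ : Q ∈ (I : Set ℤ).pi U := by
    intro i hi
    rw [show Q i = Q₀ i from Subtype.ext (hBI i hi)]
    exact (hU i hi).2
  exact interior_subset (hIU hQ)

theorem exists_uniform_hasResidualBound [CompleteSpace X] (hκ : 0 ≤ κ) (hκc : κ < c)
    (hres : ∀ B : ℤ → X →L[ℝ] X, (∀ n, ‖A n - B n‖ ≤ c) → ∃ L, HasResidualBound B L)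
    (hsol : ∀ B : ℤ → X →L[ℝ] X, (∀ n, ‖A n - B n‖ ≤ κ) → HasBoundedSolutions B) :
    ∃ L, ∀ B : ℤ → X →L[ℝ] X, (∀ n, ‖A n - B n‖ ≤ κ) → HasResidualBound B L := by
  obtain ⟨I, B₀, L, hB₀, hL⟩ := exists_finset_hasResidualBound hκ
    fun B hB => hres B fun n => (hB n).trans hκc.le
  induction I using Finset.induction_on generalizing L with
  | empty => exact ⟨L, fun B hB => hL B hB (by simp)⟩
  | insert m I _ ih =>
    refine ih (L * (1 + (κ + κ) * (L + (κ + κ) * L / (c - κ)))) fun B hB hBI => ?_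
    have hupdate {T : X →L[ℝ] X} {r : ℝ} (hr : κ ≤ r) (hT : ‖A m - T‖ ≤ r) (n : ℤ) :
        ‖A n - Function.update B m T n‖ ≤ r := by
      rcases eq_or_ne n m with rfl | hn
      · rwa [Function.update_self]
      · rw [Function.update_of_ne hn]
        exact (hB n).trans hr
    refine HasResidualBound.of_update (S := B₀ m) (ρ := κ + κ) (τ := c - κ)
      (hL _ (hupdate le_rfl (hB₀ m)) fun i hi => ?_) (hsol _ (hupdate le_rfl (hB₀ m)))
      ?_ (sub_pos.2 hκc) fun T hT => hres _ (hupdate hκc.le ?_)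
    · rcases eq_or_ne i m with rfl | him
      · rw [Function.update_self]
      · rw [Function.update_of_ne him, hBI i (Finset.mem_of_mem_insert_of_ne hi him)]
    · rw [← sub_sub_sub_cancel_left _ _ (A m)]
      exact norm_sub_le_of_le (hB₀ m) (hB m)
    · rw [← sub_sub_sub_cancel_right _ _ (B m)]
      linarith [norm_sub_le_of_le (hB m) hT]

end Uniform

end ResidualBounds

section ContinuityMethod

variable {F : Type*} [NormedAddCommGroup F] [CompleteSpace F] {C D : ℝ≥0}

theorem surjective_sub_of_antilipschitzWith {T N : F → F} (hT : Function.Surjective T)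
    (hTC : AntilipschitzWith C T) (hN : LipschitzWith D N) (hCD : C * D < 1) :
    Function.Surjective fun x => T x - N x := by
  intro w
  have hS := Function.rightInverse_surjInv hT
  have hcontr : ContractingWith (C * D) fun x => Function.surjInv hT (w + N x) :=
    ⟨hCD, (hTC.to_rightInverse hS).comp (by simpa using (LipschitzWith.const w).add hN)⟩
  refine ⟨hcontr.fixedPoint, ?_⟩
  have hfix : T hcontr.fixedPoint = w + N hcontr.fixedPoint := by
    conv_lhs => rw [← hcontr.fixedPoint_isFixedPt.eq]
    exact hS _
  exact sub_eq_iff_eq_add.2 hfix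

theorem surjective_sub_of_forall_antilipschitzWith [NormedSpace ℝ F] {K : F → F}
    (hK : LipschitzWith D K)
    (hC : ∀ t ∈ Set.Icc (0 : ℝ) 1, AntilipschitzWith C fun x => x - t • K x) :
    Function.Surjective fun x => x - K x := by
  obtain ⟨k, hk⟩ := exists_nat_gt (C * D)
  have hk₀ : 0 < (k : ℝ≥0) := pos_of_gt hk
  suffices h : ∀ i : ℕ, i ≤ k → Function.Surjective fun x => x - ((i : ℝ) / k) • K x by
    have hk₁ : (k : ℝ) / k = 1 := div_self (by exact_mod_cast hk₀.ne')
    simpa only [hk₁, one_smul] using h k le_rfl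
  intro i
  induction i with
  | zero =>
    intro _
    simp only [Nat.cast_zero, zero_div, zero_smul, sub_zero]
    exact Function.surjective_id
  | succ i ih =>
    intro hi
    have hi' : ((i : ℝ) / k) ∈ Set.Icc (0 : ℝ) 1 := by
      refine ⟨by positivity, div_le_one_of_le₀ ?_ (by positivity)⟩
      exact_mod_cast (Nat.le_succ i).trans hi
    have hsmall : C * (‖(1 : ℝ) / k‖₊ * D) < 1 := by
      rw [nnnorm_div, nnnorm_one, Real.nnnorm_natCast, mul_left_comm, one_div_mul_eq_div]
      exact (div_lt_one hk₀).2 hk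
    have := surjective_sub_of_antilipschitzWith (ih ((Nat.le_succ i).trans hi)) (hC _ hi')
      ((lipschitzWith_smul ((1 : ℝ) / k)).comp hK) hsmall
    simpa only [Function.comp_apply, sub_sub, ← add_smul, ← add_div, Nat.cast_succ] using this

end ContinuityMethod

theorem exists_lipschitzWith_superposition {ι X : Type*} [TopologicalSpace ι]
    [DiscreteTopology ι] [SeminormedAddCommGroup X] {N : ι → X → X} {K : ℝ≥0} {δ : ℝ}
    (hN : ∀ i, LipschitzWith K (N i)) (hδ : ∀ i, ‖N i 0‖ ≤ δ) :
    ∃ S : (ι →ᵇ X) → ι →ᵇ X, LipschitzWith K S ∧ ∀ f i, S f i = N i (f i) := by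
  have hbound (f : ι →ᵇ X) (i : ι) : ‖N i (f i)‖ ≤ K * ‖f‖ + δ := by
    refine (norm_le_norm_sub_add _ (N i 0)).trans (add_le_add ?_ (hδ i))
    refine ((hN i).norm_sub_le _ _).trans ?_
    rw [sub_zero]
    gcongr
    exact f.norm_coe_le_norm i
  refine ⟨fun f => .ofNormedAddCommGroupDiscrete (fun i => N i (f i)) _ (hbound f),
    .of_dist_le_mul fun f g => ?_, fun f i => rfl⟩
  refine (BoundedContinuousFunction.dist_le (by positivity)).2 fun i => ?_
  refine ((hN i).dist_le_mul _ _).trans ?_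
  gcongr
  exact BoundedContinuousFunction.dist_coe_le_dist i

section Perturbation

variable {X : Type*} [NormedAddCommGroup X] [NormedSpace ℝ X]
  {A : ℤ → X →L[ℝ] X} {κ L δ η V : ℝ} {Φ : ℤ → X → X} {x y : ℤ → X}

/-- The maps `Φ n` differ from `A n` by maps with Lipschitz constant `κ`. -/
def IsLipschitzPerturbation (A : ℤ → X →L[ℝ] X) (κ : ℝ) (Φ : ℤ → X → X) : Prop :=
  ∀ n x y, ‖Φ n x - Φ n y - A n (x - y)‖ ≤ κ * ‖x - y‖

theorem isLipschitzPerturbation_self (A : ℤ → X →L[ℝ] X) (hκ : 0 ≤ κ) :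
    IsLipschitzPerturbation A κ fun n => A n := by
  intro n x y
  rw [map_sub, sub_self, norm_zero]
  positivity

theorem IsLipschitzPerturbation.lipschitzWith_sub (hΦ : IsLipschitzPerturbation A κ Φ) (n : ℤ) :
    LipschitzWith κ.toNNReal fun x => Φ n x - A n x := by
  refine .of_dist_le' fun x y => ?_
  rw [dist_eq_norm, dist_eq_norm, sub_sub_sub_comm, ← map_sub]
  exact hΦ n x y

theorem IsLipschitzPerturbation.add_smul_sub (hΦ : IsLipschitzPerturbation A κ Φ) {t : ℝ}
    (ht : t ∈ Set.Icc 0 1) :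
    IsLipschitzPerturbation A κ fun n x => A n x + t • (Φ n x - A n x) := by
  intro n x y
  calc ‖A n x + t • (Φ n x - A n x) - (A n y + t • (Φ n y - A n y)) - A n (x - y)‖
      = t * ‖Φ n x - Φ n y - A n (x - y)‖ := by
        rw [← Real.norm_of_nonneg ht.1, ← norm_smul, Real.norm_of_nonneg ht.1, map_sub]
        congr 1
        module
    _ ≤ ‖Φ n x - Φ n y - A n (x - y)‖ := mul_le_of_le_one_left (norm_nonneg _) ht.2
    _ ≤ κ * ‖x - y‖ := hΦ n x y

theorem IsLipschitzPerturbation.exists_secant (hΦ : IsLipschitzPerturbation A κ Φ)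
    (hκ : 0 ≤ κ) (x y : ℤ → X) :
    ∃ B : ℤ → X →L[ℝ] X, (∀ n, ‖A n - B n‖ ≤ κ) ∧
      ∀ n, B n (x n - y n) = Φ n (x n) - Φ n (y n) := by
  choose φ u hφu hφ using fun n => exists_rank_one_apply_eq hκ (hΦ n (x n) (y n))
  refine ⟨fun n => A n + (φ n).smulRight (u n), fun n => ?_, fun n => ?_⟩
  · rw [sub_add_cancel_left, norm_neg]
    exact hφu n
  · rw [add_apply, ContinuousLinearMap.smulRight_apply, hφ, add_sub_cancel]

/-- The linear dynamics `A` is solvable for bounded forcing terms, and all linear dynamics at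
distance at most `κ` from it have the same residual bound `L`. This is what the conjugacy theorem
uses of a robust exponential dichotomy. -/
structure IsUniformlyAdmissible (A : ℤ → X →L[ℝ] X) (κ L : ℝ) : Prop where
  radius_nonneg : 0 ≤ κ
  hasBoundedSolutions : HasBoundedSolutions A
  hasResidualBound (B : ℤ → X →L[ℝ] X) (hB : ∀ n, ‖A n - B n‖ ≤ κ) : HasResidualBound B L

namespace IsUniformlyAdmissible

theorem bound_nonneg (hA : IsUniformlyAdmissible A κ L) : 0 ≤ L :=
  (hA.hasResidualBound A fun n => by simpa using hA.radius_nonneg).nonneg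

theorem norm_sub_le (hA : IsUniformlyAdmissible A κ L) (hΦ : IsLipschitzPerturbation A κ Φ)
    (hV : ∀ n, ‖x n - y n‖ ≤ V)
    (hη : ∀ n, ‖x (n + 1) - Φ n (x n) - (y (n + 1) - Φ n (y n))‖ ≤ η) (n : ℤ) :
    ‖x n - y n‖ ≤ L * η := by
  obtain ⟨B, hB, hBxy⟩ := hΦ.exists_secant hA.radius_nonneg x y
  refine (hA.hasResidualBound B hB).norm_le_of_bounded (y := fun n => x n - y n) hV
    (fun n => ?_) n
  rw [hBxy, sub_sub_sub_comm]
  exact hη n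

theorem norm_sub_le_of_window (hA : IsUniformlyAdmissible A κ L)
    (hΦ : IsLipschitzPerturbation A κ Φ) (hx : ∀ n, x (n + 1) = Φ n (x n))
    (hy : ∀ n, y (n + 1) = Φ n (y n)) {W : ℕ} (hW : 0 < W) {n₀ : ℤ}
    (hV : ∀ n, |n - n₀| ≤ W → ‖x n - y n‖ ≤ V) : ‖x n₀ - y n₀‖ ≤ L * (V / W) := by
  obtain ⟨B, hB, hBxy⟩ := hΦ.exists_secant hA.radius_nonneg x y
  rw [← zero_add (V / W)]
  refine (hA.hasResidualBound B hB).norm_le_of_window (y := fun n => x n - y n) hW hV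
    fun n => ?_
  rw [hBxy, hx, hy, sub_self, norm_zero]

theorem orbit_unique (hA : IsUniformlyAdmissible A κ L) (hΦ : IsLipschitzPerturbation A κ Φ)
    (hx : ∀ n, x (n + 1) = Φ n (x n)) (hy : ∀ n, y (n + 1) = Φ n (y n))
    (hV : ∀ n, ‖x n - y n‖ ≤ V) (n : ℤ) : x n = y n := by
  have := hA.norm_sub_le hΦ hV (η := 0) (fun n => by simp [hx, hy]) n
  rwa [mul_zero, norm_le_zero_iff, sub_eq_zero] at this

theorem continuous_of_norm_sub_le {Y : Type*} [TopologicalSpace Y]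
    (hA : IsUniformlyAdmissible A κ L) (hΦ : IsLipschitzPerturbation A κ Φ) {H z : ℤ → Y → X}
    {R : ℝ} (hH : ∀ n, Continuous (H n)) (hz : ∀ n p, z (n + 1) p = Φ n (z n p))
    (hzH : ∀ n p, ‖z n p - H n p‖ ≤ R) (n : ℤ) : Continuous (z n) := by
  refine continuous_iff_continuousAt.2 fun p₀ => Metric.continuousAt_iff'.2 fun ε hε => ?_
  have hlim : Tendsto (fun W : ℕ => L * ((R + 1 + R) / W)) atTop (𝓝 (L * 0)) :=
    (tendsto_const_div_atTop_nhds_zero_nat _).const_mul L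
  rw [mul_zero] at hlim
  obtain ⟨W, hWε, hW⟩ := ((hlim.eventually_lt_const hε).and (eventually_gt_atTop 0)).exists
  have hnear : ∀ᶠ p in 𝓝 p₀, ∀ k ∈ Finset.Icc (n - W) (n + W), dist (H k p) (H k p₀) < 1 :=
    (eventually_all_finset _).2 fun k _ =>
      Metric.continuousAt_iff'.1 (hH k).continuousAt 1 one_pos
  filter_upwards [hnear] with p hp
  rw [dist_eq_norm]
  refine (hA.norm_sub_le_of_window hΦ (x := (z · p)) (y := (z · p₀)) (hz · p) (hz · p₀) hW
    fun k hk => ?_).trans_lt hWε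
  rw [abs_le] at hk
  have hHk : ‖H k p - H k p₀‖ < 1 := by
    rw [← dist_eq_norm]
    exact hp k (Finset.mem_Icc.2 ⟨by lia, by lia⟩)
  calc ‖z k p - z k p₀‖
      = ‖z k p - H k p + (H k p - H k p₀) - (z k p₀ - H k p₀)‖ := by congr 1; abel
    _ ≤ R + 1 + R := norm_sub_le_of_le (norm_add_le_of_le (hzH k p) hHk.le) (hzH k p₀)

theorem dist_le (hA : IsUniformlyAdmissible A κ L) (hΦ : IsLipschitzPerturbation A κ Φ)
    {u v f g : ℤ →ᵇ X} (hu : ∀ n, u (n + 1) = Φ n (u n) + f n)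
    (hv : ∀ n, v (n + 1) = Φ n (v n) + g n) : dist u v ≤ L * dist f g := by
  refine (BoundedContinuousFunction.dist_le (mul_nonneg hA.bound_nonneg dist_nonneg)).2 fun n => ?_
  rw [dist_eq_norm]
  refine hA.norm_sub_le hΦ (V := dist u v) (fun n => ?_) (fun n => ?_) n
  · rw [← dist_eq_norm]
    exact BoundedContinuousFunction.dist_coe_le_dist n
  · rw [hu, hv, add_sub_cancel_left, add_sub_cancel_left, ← dist_eq_norm]
    exact BoundedContinuousFunction.dist_coe_le_dist n

theorem exists_lipschitzWith_solution_map (hA : IsUniformlyAdmissible A κ L) :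
    ∃ G : (ℤ →ᵇ X) → ℤ →ᵇ X, LipschitzWith L.toNNReal G ∧
      ∀ f n, G f (n + 1) = A n (G f n) + f n := by
  have hsol (f : ℤ →ᵇ X) : ∃ v : ℤ →ᵇ X, ∀ n, v (n + 1) = A n (v n) + f n := by
    obtain ⟨v, V, hV, hv⟩ := hA.hasBoundedSolutions f ‖f‖ f.norm_coe_le_norm
    exact ⟨.ofNormedAddCommGroupDiscrete v V hV, hv⟩
  choose G hG using hsol
  exact ⟨G, .of_dist_le' fun f g =>
    hA.dist_le (isLipschitzPerturbation_self A hA.radius_nonneg) (hG f) (hG g), hG⟩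

-- Every bounded sequence `v` is the solution `G f` of the linear equation for some forcing `f`, so
-- it suffices to solve `f = N (G f)` for the superposition operator `N` of `Φ n - A n`. The
-- residual bound along `A + t (Φ - A)` is the a priori estimate for the continuity method.
theorem exists_bounded_orbit [CompleteSpace X] (hA : IsUniformlyAdmissible A κ L)
    (hΦ : IsLipschitzPerturbation A κ Φ) (hδ : ∀ n, ‖Φ n 0‖ ≤ δ) :
    ∃ v : ℤ →ᵇ X, ∀ n, v (n + 1) = Φ n (v n) := by
  obtain ⟨G, hGL, hG⟩ := hA.exists_lipschitzWith_solution_map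
  obtain ⟨N, hNκ, hN⟩ := exists_lipschitzWith_superposition hΦ.lipschitzWith_sub
    (fun n => by simpa using hδ n)
  lift κ to ℝ≥0 using hA.radius_nonneg
  lift L to ℝ≥0 using hA.bound_nonneg
  rw [Real.toNNReal_coe] at hNκ hGL
  have hanti : ∀ t ∈ Set.Icc (0 : ℝ) 1,
      AntilipschitzWith (1 + κ * L) fun f => f - t • N (G f) := by
    intro t ht
    refine .of_le_mul_dist fun f g => ?_
    have hsol (f : ℤ →ᵇ X) (n : ℤ) : G f (n + 1) =
        A n (G f n) + t • (Φ n (G f n) - A n (G f n)) + (f - t • N (G f)) n := by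
      simp [hG, hN]
    have hdist := hA.dist_le (hΦ.add_smul_sub ht) (hsol f) (hsol g)
    set d := dist (f - t • N (G f)) (g - t • N (G g))
    calc dist f g = dist (f - t • N (G f) + t • N (G f)) (g - t • N (G g) + t • N (G g)) := by
          rw [sub_add_cancel, sub_add_cancel]
      _ ≤ d + dist (t • N (G f)) (t • N (G g)) := dist_add_add_le _ _ _ _
      _ ≤ d + κ * (L * d) := by
          gcongr
          rw [dist_smul₀, Real.norm_of_nonneg ht.1]
          refine (mul_le_of_le_one_left dist_nonneg ht.2).trans ?_
          exact (hNκ.dist_le_mul _ _).trans (by gcongr)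
      _ = _ := by
          push_cast
          ring
  obtain ⟨f, hf⟩ := surjective_sub_of_forall_antilipschitzWith (hNκ.comp hGL) hanti 0
  refine ⟨G f, fun n => ?_⟩
  have hfn : f n = Φ n (G f n) - A n (G f n) := by
    rw [← hN]
    exact DFunLike.congr_fun (sub_eq_zero.1 hf) n
  rw [hG, hfn, add_sub_cancel]

end IsUniformlyAdmissible

end Perturbation

section Conjugacy

variable {X : Type*} [NormedAddCommGroup X] [NormedSpace ℝ X]
  {A : ℤ → X →L[ℝ] X} {κ L δ : ℝ}

namespace IsUniformlyAdmissible

theorem exists_shadowing_orbit [CompleteSpace X] {Φ : ℤ → X → X}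
    (hA : IsUniformlyAdmissible A κ L) (hΦ : IsLipschitzPerturbation A κ Φ) {x : ℤ → X}
    (hx : ∀ n, ‖x (n + 1) - Φ n (x n)‖ ≤ δ) :
    ∃ z : ℤ → X, (∀ n, z (n + 1) = Φ n (z n)) ∧ ∀ n, ‖z n - x n‖ ≤ L * δ := by
  obtain ⟨v, hv⟩ := hA.exists_bounded_orbit (Φ := fun n u => Φ n (x n + u) - x (n + 1))
    (fun n u w => by simpa using hΦ n (x n + u) (x n + w))
    (fun n => by simpa [norm_sub_rev] using hx n)
  have hz (n : ℤ) : x (n + 1) + v (n + 1) = Φ n (x n + v n) := by rw [hv, add_sub_cancel]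
  refine ⟨fun n => x n + v n, hz, hA.norm_sub_le hΦ (V := ‖v‖) (fun n => ?_) fun n => ?_⟩
  · rw [add_sub_cancel_left]
    exact v.norm_coe_le_norm n
  · rw [hz, sub_self, zero_sub, norm_neg]
    exact hx n

theorem semiconj_unique (hA : IsUniformlyAdmissible A κ L) (Φ : ℤ → X ≃ₜ X) {Ψ : ℤ → X → X}
    (hΨ : IsLipschitzPerturbation A κ Ψ) {h k : ℤ → X → X} {V : ℝ}
    (hh : ∀ m x, h (m + 1) (Φ m x) = Ψ m (h m x)) (hk : ∀ m x, k (m + 1) (Φ m x) = Ψ m (k m x))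
    (hV : ∀ m x, ‖h m x - k m x‖ ≤ V) : h = k := by
  obtain ⟨H, hH⟩ := exists_forall_succ_eq_mul Φ
  funext m x
  have := hA.orbit_unique hΨ (x := fun n => h n (H n ((H m).symm x)))
    (y := fun n => k n (H n ((H m).symm x))) (fun n => by rw [hH, Homeomorph.mul_apply, hh])
    (fun n => by rw [hH, Homeomorph.mul_apply, hk]) (fun n => hV _ _) m
  rwa [Homeomorph.apply_symm_apply] at this

variable [CompleteSpace X]

theorem exists_semiconj (hA : IsUniformlyAdmissible A κ L) (Φ : ℤ → X ≃ₜ X) {Ψ : ℤ → X → X}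
    (hΨ : IsLipschitzPerturbation A κ Ψ) (hδ : ∀ n x, ‖Φ n x - Ψ n x‖ ≤ δ) :
    ∃ h : ℤ → X → X, (∀ m, Continuous (h m)) ∧ (∀ m x, h (m + 1) (Φ m x) = Ψ m (h m x)) ∧
      ∀ m x, ‖h m x - x‖ ≤ L * δ := by
  obtain ⟨H, hH⟩ := exists_forall_succ_eq_mul Φ
  have hpseudo (p : X) (n : ℤ) : ‖H (n + 1) p - Ψ n (H n p)‖ ≤ δ := by
    rw [hH]
    exact hδ n (H n p)
  choose z hz hzH using fun p => hA.exists_shadowing_orbit hΨ (x := fun n => H n p) (hpseudo p)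
  refine ⟨fun m x => z ((H m).symm x) m, fun m => ?_, fun m x => ?_, fun m x => ?_⟩
  · exact (hA.continuous_of_norm_sub_le hΨ (z := fun n p => z p n) (fun n => (H n).continuous)
      (fun n p => hz p n) (fun n p => hzH p n) m).comp (H m).symm.continuous
  · have hsymm : (H (m + 1)).symm (Φ m x) = (H m).symm x := by
      rw [Homeomorph.symm_apply_eq, hH, Homeomorph.mul_apply, Homeomorph.apply_symm_apply]
    simp only [hsymm, hz]
  · simpa using hzH ((H m).symm x) m

theorem existsUnique_conjugacy (hA : IsUniformlyAdmissible A κ L) {Φ Ψ : ℤ → X ≃ₜ X}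
    (hΦ : IsLipschitzPerturbation A κ fun n => Φ n)
    (hΨ : IsLipschitzPerturbation A κ fun n => Ψ n)
    (hδ : ∀ n x, ‖Φ n x - Ψ n x‖ ≤ δ) {ε : ℝ} (hε : L * δ ≤ ε) :
    ∃! h : ℤ → X → X, (∀ m, IsHomeomorph (h m)) ∧
      (∀ m x, h (m + 1) (Φ m x) = Ψ m (h m x)) ∧ ∀ m x, ‖h m x - x‖ ≤ ε := by
  obtain ⟨h, hcont, hsemi, hclose⟩ := hA.exists_semiconj Φ hΨ hδ
  obtain ⟨k, kcont, ksemi, kclose⟩ := hA.exists_semiconj Ψ hΦ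
    fun n x => (norm_sub_rev _ _).trans_le (hδ n x)
  have hkh : (fun m x => k m (h m x)) = fun _ x => x :=
    hA.semiconj_unique Φ hΦ (fun m x => by rw [hsemi, ksemi]) (fun m x => rfl) fun m x =>
      (norm_sub_le_norm_sub_add_norm_sub ..).trans (add_le_add (kclose m (h m x)) (hclose m x))
  have hhk : (fun m x => h m (k m x)) = fun _ x => x :=
    hA.semiconj_unique Ψ hΨ (fun m x => by rw [ksemi, hsemi]) (fun m x => rfl) fun m x =>
      (norm_sub_le_norm_sub_add_norm_sub ..).trans (add_le_add (hclose m (k m x)) (kclose m x))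
  refine ⟨h, ⟨fun m => ?_, hsemi, fun m x => (hclose m x).trans hε⟩,
    fun l ⟨_, lsemi, lclose⟩ => ?_⟩
  · exact (Homeomorph.mk ⟨h m, k m, fun x => congrFun₂ hkh m x, fun x => congrFun₂ hhk m x⟩
      (hcont m) (kcont m)).isHomeomorph
  · refine hA.semiconj_unique Φ hΨ lsemi hsemi (V := ε + L * δ) fun m x => ?_
    rw [← sub_sub_sub_cancel_right _ _ x]
    exact norm_sub_le_of_le (lclose m x) (hclose m x)

end IsUniformlyAdmissible

end Conjugacy

theorem exists_isUniformlyAdmissible {X : Type*} [NormedAddCommGroup X] [NormedSpace ℝ X]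
    [CompleteSpace X] {A : ℤ → X →L[ℝ] X} (hinj : ∀ n, Function.Injective (A n)) {c κ : ℝ}
    (hrobust : ∀ B : ℤ → X →L[ℝ] X, (∀ n, ‖A n - B n‖ ≤ c) → ExpDichotomy B)
    (hκ : 0 ≤ κ) (hκc : κ < c) : ∃ L, IsUniformlyAdmissible A κ L := by
  have hdich (B : ℤ → X →L[ℝ] X) (hB : ∀ n, ‖A n - B n‖ ≤ κ) : ExpDichotomy B :=
    hrobust B fun n => (hB n).trans hκc.le
  obtain ⟨L, hL⟩ := exists_uniform_hasResidualBound hκ hκc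
    (fun B hB => (hrobust B hB).exists_hasResidualBound (injective_of_norm_sub_le hrobust hinj hB))
    fun B hB => (hdich B hB).hasBoundedSolutions
  exact ⟨L, hκ, (hdich A fun n => by simpa using hκ).hasBoundedSolutions, hL⟩

theorem nonautonomous_grobman_hartman_general {X : Type*} [NormedAddCommGroup X]
    [NormedSpace ℝ X] [CompleteSpace X] (A : ℤ → X ≃L[ℝ] X) {c κ : ℝ}
    (hrobust : ∀ B : ℤ → X →L[ℝ] X,
      (∀ m, ‖(A m : X →L[ℝ] X) - B m‖ ≤ c) → ExpDichotomy B)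
    (hκ : 0 ≤ κ) (hκc : κ < c) :
    ∃ L : ℝ, 0 ≤ L ∧ ∀ (δ : ℝ) (g : ℤ → X → X),
      (∀ n x y, ‖g n x - g n y‖ ≤ κ * ‖x - y‖) →
      (∀ n x, ‖g n x‖ ≤ δ) →
      (∀ n, IsHomeomorph fun x => A n x + g n x) →
      ∀ ε ≥ L * δ, ∃! h : ℤ → X → X,
        (∀ m, IsHomeomorph (h m)) ∧
        (∀ (m : ℤ) (x : X), h (m + 1) (A m x + g m x) = A m (h m x)) ∧
        (∀ (m : ℤ) (x : X), ‖h m x - x‖ ≤ ε) := by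
  obtain ⟨L, hA⟩ := exists_isUniformlyAdmissible (fun n => (A n).injective) hrobust hκ hκc
  refine ⟨L, hA.bound_nonneg, fun δ g hgκ hgδ hG ε hε => ?_⟩
  refine hA.existsUnique_conjugacy (Φ := fun n => (hG n).homeomorph)
    (Ψ := fun n => (A n).toHomeomorph) (fun n x y => ?_) (isLipschitzPerturbation_self _ hκ)
    (fun n x => ?_) hε
  · simpa [add_sub_add_comm] using hgκ n x y
  · simpa using hgδ n x

/-- Nonautonomous Grobman–Hartman theorem: for sufficiently small perturbations `g n` of a
hyperbolic linear dynamics, there is a unique sequence of homeomorphisms `h m` conjugating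
the perturbed dynamics to the linear one and uniformly close to the identity. -/
theorem nonautonomous_grobman_hartman {X : Type*} [NormedAddCommGroup X]
    [NormedSpace ℝ X] [CompleteSpace X]
    (A : ℤ → X ≃L[ℝ] X) (M : ℝ) (hM : ∀ m, ‖(A m : X →L[ℝ] X)‖ ≤ M)
    (hED : ExpDichotomy fun m => (A m : X →L[ℝ] X))
    (c : ℝ) (hc : 0 < c)
    (hrobust : ∀ B : ℤ → X →L[ℝ] X,
      (∀ m, ‖(A m : X →L[ℝ] X) - B m‖ ≤ c) → ExpDichotomy B)
    (D r : ℝ) (hD : 0 < D) (hr : 0 < r) :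
    ∃ δ > (0 : ℝ), ∃ ε > (0 : ℝ),
      ∀ (g : ℤ → X → X) (g' : ℤ → X → X →L[ℝ] X),
        (∀ n x, HasFDerivAt (g n) (g' n x) x) →
        (∀ n x, ‖g' n x‖ ≤ c / 2) →
        (∀ n x y, ‖g' n x - g' n y‖ ≤ D * ‖x - y‖ ^ r) →
        (∀ n x, ‖g n x‖ ≤ δ) →
        (∀ n, IsHomeomorph fun x => A n x + g n x) →
        ∃! h : ℤ → X → X,
          (∀ m, IsHomeomorph (h m)) ∧
          (∀ (m : ℤ) (x : X), h (m + 1) (A m x + g m x) = A m (h m x)) ∧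
          (∀ (m : ℤ) (x : X), ‖h m x - x‖ ≤ ε) := by
  obtain ⟨L, hL, hconj⟩ :=
    nonautonomous_grobman_hartman_general A hrobust (half_pos hc).le (half_lt_self hc)
  exact ⟨1, one_pos, L + 1, by positivity, fun g g' hg hg' _ hgδ hG =>
    hconj 1 g (fun n x y => convex_univ.norm_image_sub_le_of_norm_hasFDerivWithin_le
      (fun z _ => (hg n z).hasFDerivWithinAt) (fun z _ => hg' n z) (Set.mem_univ y)
      (Set.mem_univ x)) hgδ hG (L + 1) (by linarith)⟩
end

section
/- Let $(A_m)_{m\in\mathbb{Z}}$ be a uniformly bounded sequence of invertible bounded operators on a Banach space $X$ admitting an exponential dichotomy, and let $(g_n)$ be maps with $\sup_n\sup_x\|g_n(x)\|\le\delta$ with appropriate smallness and smoothness conditions. If $(y_n)_{n\in\mathbb{Z}}$ is a solution of $y_{n+1}=A_ny_n+g_n(y_n)$ with $\lambda:=\limsup_{n\to\infty}\frac{1}{n}\log\|y_n\|>0$, then there exists a solution $(x_n)$ of the linear equation $x_{n+1}=A_nx_n$ with $\limsup_{n\to\infty}\frac{1}{n}\log\|x_n\|=\lambda$. -/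
/-!
Since the perturbation is bounded, its solution `y` is a pseudo-orbit of the linear system. The
Green function of the dichotomy solves the inhomogeneous equation `z (n + 1) = A n (z n) + e n`
with bounded `z` for bounded `e`, so that `x = y - z` is an orbit at bounded distance from `y`.
Finally `log⁺ ‖x n‖` and `log⁺ ‖y n‖` differ by a bounded amount, which is negligible after
division by `n`, and `log⁺` sees the same positive growth rates as `log`.
-/

section GrowthRate

open Filter
open scoped Real

variable {ι E : Type*} [SeminormedAddCommGroup E] {l : Filter ι} {τ : ι → ℝ} {x y : ι → E}

theorem eventually_log_norm_div_lt_of_isBoundedUnder_norm_sub (hτ : Tendsto τ l atTop)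
    (hxy : l.IsBoundedUnder (· ≤ ·) fun i => ‖x i - y i‖) {a b : ℝ} (ha : 0 ≤ a) (hab : a < b)
    (hx : ∀ᶠ i in l, Real.log ‖x i‖ / τ i < a) :
    ∀ᶠ i in l, Real.log ‖y i‖ / τ i < b := by
  obtain ⟨K, hK⟩ := hxy.eventually_le
  have hlarge : ∀ᶠ i in l, log⁺ K + Real.log 2 < (b - a) * τ i :=
    (hτ.const_mul_atTop (sub_pos.2 hab)).eventually_gt_atTop _
  filter_upwards [hx, hK, hlarge, hτ.eventually_gt_atTop 0] with i hxi hKi hlarge_i hτi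
  have hx_le : log⁺ ‖x i‖ ≤ a * τ i :=
    max_le (by positivity) ((div_lt_iff₀ hτi).1 hxi).le
  rw [div_lt_iff₀ hτi]
  calc Real.log ‖y i‖
      ≤ log⁺ ‖x i + (y i - x i)‖ := by
        rw [add_sub_cancel]; exact le_max_right _ _
    _ ≤ log⁺ ‖x i‖ + log⁺ ‖y i - x i‖ + Real.log 2 := Real.posLog_norm_add_le _ _
    _ ≤ a * τ i + log⁺ K + Real.log 2 := by
        gcongr
        rwa [norm_sub_rev]
    _ < b * τ i := by linarith

theorem limsup_log_norm_div_eq_of_isBoundedUnder_norm_sub (hτ : Tendsto τ l atTop)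
    (hxy : l.IsBoundedUnder (· ≤ ·) fun i => ‖x i - y i‖)
    (hpos : 0 < limsup (fun i => Real.log ‖x i‖ / τ i) l) :
    limsup (fun i => Real.log ‖y i‖ / τ i) l = limsup (fun i => Real.log ‖x i‖ / τ i) l := by
  set L := limsup (fun i => Real.log ‖x i‖ / τ i) l with hL
  -- The real `limsup` of an unbounded function is `0`, so `hpos` also carries finiteness.
  have hx_bdd : l.IsBoundedUnder (· ≤ ·) fun i => Real.log ‖x i‖ / τ i :=
    not_imp_comm.1 Real.limsup_of_not_isBoundedUnder hpos.ne'
  have hx_cobdd : l.IsCoboundedUnder (· ≤ ·) fun i => Real.log ‖x i‖ / τ i :=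
    not_imp_comm.1 Real.limsup_of_not_isCoboundedUnder hpos.ne'
  have hyx : l.IsBoundedUnder (· ≤ ·) fun i => ‖y i - x i‖ := by
    simpa only [norm_sub_rev] using hxy
  have hy_lt : ∀ b > L, ∀ᶠ i in l, Real.log ‖y i‖ / τ i < b := by
    intro b hb
    obtain ⟨a, hLa, hab⟩ := exists_between hb
    exact eventually_log_norm_div_lt_of_isBoundedUnder_norm_sub hτ hxy (hpos.trans hLa).le hab
      (eventually_lt_of_limsup_lt hLa hx_bdd)
  have hlt_y : ∀ b < L, ∃ᶠ i in l, b < Real.log ‖y i‖ / τ i := by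
    intro b hb
    obtain ⟨a, hba, haL⟩ := exists_between (max_lt hb hpos)
    obtain ⟨d, had, hdL⟩ := exists_between haL
    have hlt_x := frequently_lt_of_lt_limsup hx_cobdd (hL ▸ hdL)
    contrapose! hlt_x
    have hy : ∀ᶠ i in l, Real.log ‖y i‖ / τ i < a :=
      hlt_x.mono fun i hi => hi.trans_lt ((le_max_left _ _).trans_lt hba)
    exact (eventually_log_norm_div_lt_of_isBoundedUnder_norm_sub hτ hyx
      ((le_max_right _ _).trans hba.le) had hy).mono fun _ => le_of_lt
  have hy_bdd : l.IsBoundedUnder (· ≤ ·) fun i => Real.log ‖y i‖ / τ i :=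
    isBoundedUnder_of_eventually_le ((hy_lt (L + 1) (lt_add_one L)).mono fun _ => le_of_lt)
  have hy_cobdd : l.IsCoboundedUnder (· ≤ ·) fun i => Real.log ‖y i‖ / τ i :=
    IsCoboundedUnder.of_frequently_ge ((hlt_y 0 hpos).mono fun _ => le_of_lt)
  exact le_antisymm ((limsup_le_iff hy_cobdd hy_bdd).2 hy_lt)
    ((le_limsup_iff hy_cobdd hy_bdd).2 hlt_y)

end GrowthRate

section GreenFunction

theorem summable_exp_neg_mul_abs_int {lam : ℝ} (hlam : 0 < lam) :
    Summable fun k : ℤ => Real.exp (-lam * |(k : ℝ)|) := by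
  have hnat : Summable fun k : ℕ => Real.exp (k * -lam) :=
    Real.summable_exp_nat_mul_iff.2 (neg_neg_of_pos hlam)
  apply Summable.of_nat_of_neg <;> simpa [mul_comm] using hnat

variable {𝕜 X : Type*} [NontriviallyNormedField 𝕜] [NormedAddCommGroup X] [NormedSpace 𝕜 X]
  {A : ℤ → X →L[𝕜] X}

theorem exists_bounded_solution_of_summable_kernel [CompleteSpace X]
    {G : ℤ → ℤ → X →L[𝕜] X} {w : ℤ → ℝ} (hw : Summable w)
    (hGw : ∀ n j, ‖G n j‖ ≤ w (n - j))
    (hG : ∀ n j, G (n + 1) j =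
      (A n).comp (G n j) + if j = n + 1 then ContinuousLinearMap.id 𝕜 X else 0)
    {e : ℤ → X} {δ : ℝ} (he : ∀ n, ‖e n‖ ≤ δ) :
    ∃ z : ℤ → X, (∀ n, z (n + 1) = A n (z n) + e n) ∧ ∀ n, ‖z n‖ ≤ (∑' k, w k) * δ := by
  have hterm : ∀ n j, ‖G n j (e (j - 1))‖ ≤ w (n - j) * δ := fun n j =>
    (G n j).le_of_opNorm_le_of_le (hGw n j) (he _)
  have hbound : ∀ n, HasSum (fun j => w (n - j) * δ) ((∑' k, w k) * δ) := fun n =>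
    ((Equiv.subLeft n).hasSum_iff.2 hw.hasSum).mul_right δ
  have hsum : ∀ n, Summable fun j => G n j (e (j - 1)) := fun n =>
    (hbound n).summable.of_norm_bounded (hterm n)
  refine ⟨fun n => ∑' j, G n j (e (j - 1)), fun n => ?_,
    fun n => tsum_of_norm_bounded (hbound n) (hterm n)⟩
  have hsource : HasSum (fun j => if j = n + 1 then e n else 0) (e n) := hasSum_ite_eq _ _
  have hstep : ∀ j, G (n + 1) j (e (j - 1)) =
      A n (G n j (e (j - 1))) + if j = n + 1 then e n else 0 := by
    intro j
    rw [hG]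
    split_ifs with hj <;> simp [hj]
  simp only [hstep]
  exact (((A n).hasSum (hsum n).hasSum).add hsource).tsum_eq

/-- The Green function of the evolution family `E` with projections `P`: the forward evolution on
the stable range of `P j` for `n ≥ j`, and minus the backward evolution on the kernel of `P j` for
`n < j`. It is the bounded fundamental solution of the inhomogeneous equation. -/
def greenFunction (E : ℤ → ℤ → X →L[𝕜] X) (P : ℤ → X →L[𝕜] X) (n j : ℤ) : X →L[𝕜] X :=
  if j ≤ n then (E n j).comp (P j) else -(E n j).comp (ContinuousLinearMap.id 𝕜 X - P j)

variable {E : ℤ → ℤ → X →L[𝕜] X} {P : ℤ → X →L[𝕜] X}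

theorem greenFunction_succ (hE_self : ∀ n, E n n = ContinuousLinearMap.id 𝕜 X)
    (hE_succ : ∀ m n, E (m + 1) n = (A m).comp (E m n)) (n j : ℤ) :
    greenFunction E P (n + 1) j = (A n).comp (greenFunction E P n j) +
      if j = n + 1 then ContinuousLinearMap.id 𝕜 X else 0 := by
  rcases lt_trichotomy j (n + 1) with hj | rfl | hj
  · simp [greenFunction, hj.le, hj.ne, Int.lt_add_one_iff.1 hj, hE_succ,
      ContinuousLinearMap.comp_assoc]
  · have hE : (A n).comp (E n (n + 1)) = ContinuousLinearMap.id 𝕜 X := by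
      rw [← hE_succ, hE_self]
    simp [greenFunction, hE_self, ← ContinuousLinearMap.comp_assoc, hE]
  · simp [greenFunction, hj.not_ge, hj.ne', ((lt_add_one n).trans hj).not_ge, hE_succ,
      ContinuousLinearMap.comp_assoc]

theorem norm_greenFunction_le {C lam : ℝ}
    (hstable : ∀ m n, n ≤ m →
      ‖(E m n).comp (P n)‖ ≤ C * Real.exp (-lam * ((m - n : ℤ) : ℝ)))
    (hunstable : ∀ m n, m ≤ n →
      ‖(E m n).comp (ContinuousLinearMap.id 𝕜 X - P n)‖ ≤
        C * Real.exp (-lam * ((n - m : ℤ) : ℝ)))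
    (n j : ℤ) :
    ‖greenFunction E P n j‖ ≤ C * Real.exp (-lam * |((n - j : ℤ) : ℝ)|) := by
  rw [← Int.cast_abs, greenFunction]
  split_ifs with hj
  · rw [abs_of_nonneg (sub_nonneg.2 hj)]
    exact hstable n j hj
  · have hnj : n ≤ j := (not_le.1 hj).le
    rw [norm_neg, abs_sub_comm, abs_of_nonneg (sub_nonneg.2 hnj)]
    exact hunstable n j hnj

end GreenFunction

section Shadowing

variable {X : Type*} [NormedAddCommGroup X] [NormedSpace ℝ X] [CompleteSpace X]
  {A : ℤ → X →L[ℝ] X}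

theorem ExpDichotomy.exists_bounded_solution (hA : ExpDichotomy A) :
    ∃ K : ℝ, ∀ (e : ℤ → X) (δ : ℝ), (∀ n, ‖e n‖ ≤ δ) →
      ∃ z : ℤ → X, (∀ n, z (n + 1) = A n (z n) + e n) ∧ ∀ n, ‖z n‖ ≤ K * δ := by
  obtain ⟨E, P, C, lam, -, hlam, hE_self, hE_succ, -, -, hstable, hunstable⟩ := hA
  exact ⟨_, fun e δ he => exists_bounded_solution_of_summable_kernel
    ((summable_exp_neg_mul_abs_int hlam).mul_left C)
    (norm_greenFunction_le hstable hunstable) (greenFunction_succ hE_self hE_succ) he⟩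

theorem ExpDichotomy.exists_shadowing_orbit (hA : ExpDichotomy A) :
    ∃ K : ℝ, ∀ (y : ℤ → X) (δ : ℝ), (∀ n, ‖y (n + 1) - A n (y n)‖ ≤ δ) →
      ∃ x : ℤ → X, (∀ n, x (n + 1) = A n (x n)) ∧ ∀ n, ‖y n - x n‖ ≤ K * δ := by
  obtain ⟨K, hK⟩ := hA.exists_bounded_solution
  refine ⟨K, fun y δ hy => ?_⟩
  obtain ⟨z, hz, hzK⟩ := hK _ δ hy
  refine ⟨y - z, fun n => ?_, fun n => ?_⟩
  · simp only [Pi.sub_apply, hz, map_sub]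
    abel
  · simpa only [Pi.sub_apply, sub_sub_cancel] using hzK n

theorem preservation_of_positive_lyapunov_exponents_general (hA : ExpDichotomy A)
    {y : ℤ → X} {δ : ℝ} (hy : ∀ n, ‖y (n + 1) - A n (y n)‖ ≤ δ)
    (hpos : 0 < Filter.limsup (fun n : ℤ => Real.log ‖y n‖ / (n : ℝ)) Filter.atTop) :
    ∃ x : ℤ → X, (∀ n, x (n + 1) = A n (x n)) ∧
      Filter.limsup (fun n : ℤ => Real.log ‖x n‖ / (n : ℝ)) Filter.atTop =
        Filter.limsup (fun n : ℤ => Real.log ‖y n‖ / (n : ℝ)) Filter.atTop := by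
  obtain ⟨K, hK⟩ := hA.exists_shadowing_orbit
  obtain ⟨x, hx, hxy⟩ := hK y δ hy
  exact ⟨x, hx, limsup_log_norm_div_eq_of_isBoundedUnder_norm_sub tendsto_intCast_atTop_atTop
    (Filter.isBoundedUnder_of ⟨K * δ, hxy⟩) hpos⟩

end Shadowing

/-- Preservation of positive Lyapunov exponents: a solution of the perturbed system with a
positive upper Lyapunov exponent is matched by a solution of the linear system with the
same exponent. -/
theorem preservation_of_positive_lyapunov_exponents {X : Type*} [NormedAddCommGroup X]
    [NormedSpace ℝ X] [CompleteSpace X]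
    (A : ℤ → X ≃L[ℝ] X) (M : ℝ) (hM : ∀ m, ‖(A m : X →L[ℝ] X)‖ ≤ M)
    (hED : ExpDichotomy fun m => (A m : X →L[ℝ] X))
    (c : ℝ) (hc : 0 < c)
    (hrobust : ∀ B : ℤ → X →L[ℝ] X,
      (∀ m, ‖(A m : X →L[ℝ] X) - B m‖ ≤ c) → ExpDichotomy B)
    (D r : ℝ) (hD : 0 < D) (hr : 0 < r) :
    ∃ δ > (0 : ℝ),
      ∀ (g : ℤ → X → X) (g' : ℤ → X → X →L[ℝ] X),
        (∀ n x, HasFDerivAt (g n) (g' n x) x) →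
        (∀ n x, ‖g' n x‖ ≤ c / 2) →
        (∀ n x y, ‖g' n x - g' n y‖ ≤ D * ‖x - y‖ ^ r) →
        (∀ n x, ‖g n x‖ ≤ δ) →
        ∀ (y : ℤ → X) (lam : ℝ),
          (∀ n, y (n + 1) = A n (y n) + g n (y n)) →
          Filter.limsup (fun n : ℤ => Real.log ‖y n‖ / (n : ℝ)) Filter.atTop = lam →
          0 < lam →
          ∃ x : ℤ → X, (∀ n, x (n + 1) = A n (x n)) ∧
            Filter.limsup (fun n : ℤ => Real.log ‖x n‖ / (n : ℝ)) Filter.atTop = lam := by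
  refine ⟨1, one_pos, fun g g' _ _ _ hg y lam hy hlim hlam => hlim ▸ ?_⟩
  exact preservation_of_positive_lyapunov_exponents_general hED
    (fun n => by simpa [hy] using hg n (y n)) (hlim ▸ hlam)
end
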